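/- In M₄(ℂ), let Q₀ := e₀₀ ⊗ e₀₀ (the diagonal matrix diag(1,0,0,0)), Q₁ := e₁₁ ⊗ e₁₁ (diag(0,0,0,1)), P^⊥ := I₄ − Q₀ − Q₁, and ρ₀ := ½ (Q₀ + Q₁). Define E(X) := Tr(Q₀ X) Q₀ + Tr(Q₁ X) Q₁ + Tr(P^⊥ X) ρ₀. Then E is a quantum channel (completely positive, i.e. its Choi matrix is positive semidefinite, and trace-preserving), and its fixed-point space is exactly the two-dimensional span of Q₀ and Q₁: E(X) = X if and only if X = c₁ Q₀ + c₂ Q₁ for some c₁, c₂ ∈ ℂ. -/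

import Mathlib

open Matrix Kronecker
open scoped ComplexOrder

/-- The Choi matrix of a linear map on matrices indexed by `I`. -/
noncomputable def ChoiMatrix {I : Type*} [Fintype I] [DecidableEq I]
    (E : Matrix I I ℂ →ₗ[ℂ] Matrix I I ℂ) : Matrix (I × I) (I × I) ℂ :=
  ∑ i : I, ∑ j : I, (E (Matrix.single i j 1)) ⊗ₖ (Matrix.single i j 1)

noncomputable def e00 : Matrix (Fin 2) (Fin 2) ℂ := !![1, 0; 0, 0]

noncomputable def e11 : Matrix (Fin 2) (Fin 2) ℂ := !![0, 0; 0, 1]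

/-- `Q₀ = e₀₀ ⊗ e₀₀`. -/
noncomputable def Q0 : Matrix (Fin 2 × Fin 2) (Fin 2 × Fin 2) ℂ := e00 ⊗ₖ e00

/-- `Q₁ = e₁₁ ⊗ e₁₁`. -/
noncomputable def Q1 : Matrix (Fin 2 × Fin 2) (Fin 2 × Fin 2) ℂ := e11 ⊗ₖ e11

/-- `P^⊥ = I₄ - Q₀ - Q₁`. -/
noncomputable def Pperp : Matrix (Fin 2 × Fin 2) (Fin 2 × Fin 2) ℂ := 1 - Q0 - Q1

/-- `ρ₀ = ½ (Q₀ + Q₁)`. -/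
noncomputable def ρ0 : Matrix (Fin 2 × Fin 2) (Fin 2 × Fin 2) ℂ := (2 : ℂ)⁻¹ • (Q0 + Q1)

lemma choi_apply {I : Type*} [Fintype I] [DecidableEq I]
    (E : Matrix I I ℂ →ₗ[ℂ] Matrix I I ℂ) (p q : I × I) :
    ChoiMatrix E p q = E (Matrix.single p.2 q.2 1) p.1 q.1 := by
  simp only [ChoiMatrix, Matrix.sum_apply, kroneckerMap_apply]
  rw [Finset.sum_eq_single p.2, Finset.sum_eq_single q.2]
  · simp
  · intro b _ hb
    simp [Matrix.single, hb]
  · simp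
  · intro b _ hb
    simp [Matrix.single, hb]
  · simp

lemma Q0_diag : Q0 = diagonal (Pi.single (0, 0) 1) := by
  ext ⟨i, j⟩ ⟨k, l⟩
  fin_cases i <;> fin_cases j <;> fin_cases k <;> fin_cases l <;>
    simp [Q0, e00, diagonal, Pi.single_apply]

lemma Q1_diag : Q1 = diagonal (Pi.single (1, 1) 1) := by
  ext ⟨i, j⟩ ⟨k, l⟩
  fin_cases i <;> fin_cases j <;> fin_cases k <;> fin_cases l <;>
    simp [Q1, e11, diagonal, Pi.single_apply]

lemma Q0_trans : Q0ᵀ = Q0 := by rw [Q0_diag, diagonal_transpose]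

lemma Q1_trans : Q1ᵀ = Q1 := by rw [Q1_diag, diagonal_transpose]

lemma Pperp_trans : Pperpᵀ = Pperp := by simp [Pperp, Q0_trans, Q1_trans]

lemma Q0_psd : Q0.PosSemidef := by
  rw [Q0_diag]
  refine PosSemidef.diagonal fun i => ?_
  by_cases h : i = (0, 0) <;> simp [Pi.single_apply, h]

lemma Q1_psd : Q1.PosSemidef := by
  rw [Q1_diag]
  refine PosSemidef.diagonal fun i => ?_
  by_cases h : i = (1, 1) <;> simp [Pi.single_apply, h]

lemma Pperp_psd : Pperp.PosSemidef := by
  rw [Pperp, Q0_diag, Q1_diag, ← diagonal_one, diagonal_sub, diagonal_sub]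
  refine PosSemidef.diagonal fun i => ?_
  obtain ⟨i, j⟩ := i
  fin_cases i <;> fin_cases j <;> simp [Pi.single_apply]

lemma rho_psd : ρ0.PosSemidef := by
  refine (Q0_psd.add Q1_psd).smul ?_
  rw [inv_nonneg]
  exact zero_le_two

lemma Q0_tr : Q0.trace = 1 := by simp [Q0_diag, trace_diagonal]

lemma Q1_tr : Q1.trace = 1 := by simp [Q1_diag, trace_diagonal]

lemma Q00 : Q0 * Q0 = Q0 := by
  rw [Q0_diag, diagonal_mul_diagonal]
  congr 1; ext i; simp [Pi.single_apply]

lemma Q11 : Q1 * Q1 = Q1 := by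
  rw [Q1_diag, diagonal_mul_diagonal]
  congr 1; ext i; simp [Pi.single_apply]

lemma Q01 : Q0 * Q1 = 0 := by
  rw [Q0_diag, Q1_diag, diagonal_mul_diagonal, ← diagonal_zero]
  congr 1; ext ⟨i, j⟩; fin_cases i <;> fin_cases j <;> simp [Pi.single_apply]

lemma Q10 : Q1 * Q0 = 0 := by
  rw [Q0_diag, Q1_diag, diagonal_mul_diagonal, ← diagonal_zero]
  congr 1; ext ⟨i, j⟩; fin_cases i <;> fin_cases j <;> simp [Pi.single_apply]

/-- the local channel of the parent Lindbladian of the classical GHZ state: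
`E(X) = Tr(Q₀X) Q₀ + Tr(Q₁X) Q₁ + Tr(P^⊥X) ρ₀` is a quantum channel whose fixed-point
space is exactly the span of `Q₀` and `Q₁`. -/
theorem ghz_local_channel
    (E : Matrix (Fin 2 × Fin 2) (Fin 2 × Fin 2) ℂ →ₗ[ℂ]
      Matrix (Fin 2 × Fin 2) (Fin 2 × Fin 2) ℂ)
    (hE : ∀ X, E X = (Q0 * X).trace • Q0 + (Q1 * X).trace • Q1 + (Pperp * X).trace • ρ0) :
    (ChoiMatrix E).PosSemidef ∧
    (∀ X, (E X).trace = X.trace) ∧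
    (∀ X, E X = X ↔ ∃ c₁ c₂ : ℂ, X = c₁ • Q0 + c₂ • Q1) := by
  refine ⟨?_, ?_, ?_⟩
  · have h : ChoiMatrix E = Q0 ⊗ₖ Q0 + Q1 ⊗ₖ Q1 + ρ0 ⊗ₖ Pperp := by
      ext p q
      have h0 : Q0 q.2 p.2 = Q0 p.2 q.2 := congrFun (congrFun Q0_trans p.2) q.2
      have h1 : Q1 q.2 p.2 = Q1 p.2 q.2 := congrFun (congrFun Q1_trans p.2) q.2
      have h2 : Pperp q.2 p.2 = Pperp p.2 q.2 := congrFun (congrFun Pperp_trans p.2) q.2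
      rw [choi_apply, hE]
      simp only [trace_mul_single, Matrix.add_apply, Matrix.smul_apply, kroneckerMap_apply,
        h0, h1, h2, smul_eq_mul]
      simp
      ring
    rw [h]
    exact ((Q0_psd.kronecker Q0_psd).add (Q1_psd.kronecker Q1_psd)).add
      (rho_psd.kronecker Pperp_psd)
  · intro X
    rw [hE]
    simp only [trace_add, trace_smul, Q0_tr, Q1_tr, ρ0, Pperp, sub_mul, trace_sub, one_mul,
      smul_eq_mul]
    ring
  · intro X
    constructor
    · intro h
      refine ⟨(Q0 * X).trace + (Pperp * X).trace * 2⁻¹,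
        (Q1 * X).trace + (Pperp * X).trace * 2⁻¹, ?_⟩
      conv_lhs => rw [← h, hE]
      rw [ρ0]
      module
    · rintro ⟨a, b, rfl⟩
      rw [hE]
      simp [mul_add, sub_mul, Pperp, Q00, Q01, Q10, Q11, Q0_tr, Q1_tr]
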